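/- Let n ≥ 1 be an integer, θ ∈ (0, π/2], 1 ≤ k ≤ n, A > 0 and c₀ > 0. Let (s_i)_{i∈ℕ} be a sequence of smooth capillary functions on C_θ with τ[s_i] > 0, with 1-homogeneous extensions G_i, such that for every i: sup_{u ∈ S^n_θ} (|G_i(u)| + ‖∇G_i(u)‖ + ‖D²G_i(u)‖) ≤ A (uniform C² bound), ∫_{C_θ} s_i(ζ) ζ_j dσ(ζ) = 0 for all j = 1,…,n, and σ_k(τ[s_i])(ζ) ≥ c₀ for all ζ ∈ C_θ. Then there exists a constant c > 0 such that G_i(E_{n+1}) ≥ c for all i (i.e., the support functions of the enclosed bodies in the direction E_{n+1} are uniformly bounded below). -/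

import Mathlib

open MeasureTheory Real Set
open scoped RealInnerProductSpace

noncomputable section

abbrev V (n : ℕ) := EuclideanSpace ℝ (Fin (n + 1))

/-- The vertical unit vector `E_{n+1}`. -/
def Etop (n : ℕ) : V n := EuclideanSpace.single (Fin.last n) 1

/-- The spherical cap `S^n_θ`. -/
def sphCap (n : ℕ) (θ : ℝ) : Set (V n) :=
  {u | ‖u‖ = 1 ∧ Real.cos θ ≤ u (Fin.last n)}

/-- The boundary circle `∂S^n_θ`. -/
def sphCapBdry (n : ℕ) (θ : ℝ) : Set (V n) :=
  {u | ‖u‖ = 1 ∧ u (Fin.last n) = Real.cos θ}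

/-- The capillary cap `C_θ`. -/
def capCap (n : ℕ) (θ : ℝ) : Set (V n) :=
  {ζ | 0 ≤ ζ (Fin.last n) ∧ ‖ζ + Real.cos θ • Etop n‖ = 1}

/-- The open cone over `S^n_θ`. -/
def coneCap (n : ℕ) (θ : ℝ) : Set (V n) :=
  {x | ∃ l : ℝ, 0 < l ∧ ∃ u ∈ sphCap n θ, x = l • u}

/-- `G` is a positively 1-homogeneous extension of `g : C_θ → ℝ` which is `C^m` on an
open neighborhood of the cone over `S^n_θ`. -/
def IsHomExt (n : ℕ) (θ : ℝ) (m : ℕ∞) (g G : V n → ℝ) : Prop :=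
  (∃ U : Set (V n), IsOpen U ∧ coneCap n θ ⊆ U ∧ ContDiffOn ℝ m G U) ∧
  (∀ l : ℝ, 0 < l → ∀ u ∈ sphCap n θ, G (l • u) = l * G u) ∧
  (∀ ζ ∈ capCap n θ, G (ζ + Real.cos θ • Etop n) = g ζ)

/-- The Hessian of `G` at `u` as a quadratic/bilinear form. -/
def hessQ (n : ℕ) (G : V n → ℝ) (u v w : V n) : ℝ :=
  fderiv ℝ (fderiv ℝ G) u v w

/-- The Hessian matrix `D²G(u)` in the standard coordinates. -/
def hessM (n : ℕ) (G : V n → ℝ) (u : V n) : Matrix (Fin (n + 1)) (Fin (n + 1)) ℝ :=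
  fun i j => fderiv ℝ (fderiv ℝ G) u (EuclideanSpace.single i 1) (EuclideanSpace.single j 1)

/-- `σ_j` of the eigenvalues of `D²G(u)` (via characteristic polynomial coefficients). -/
def sigmaElem (n : ℕ) (j : ℕ) (G : V n → ℝ) (u : V n) : ℝ :=
  (-1 : ℝ) ^ j * ((hessM n G u).charpoly.coeff (n + 1 - j))

/-- `τ[g] ≥ 0` : the Hessian of the extension is positive semidefinite on `S^n_θ`. -/
def TauNonneg (n : ℕ) (θ : ℝ) (G : V n → ℝ) : Prop :=
  ∀ u ∈ sphCap n θ, ∀ v : V n, 0 ≤ hessQ n G u v v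

/-- `τ[g] > 0`. -/
def TauPos (n : ℕ) (θ : ℝ) (G : V n → ℝ) : Prop :=
  TauNonneg n θ G ∧
  ∀ u ∈ sphCap n θ, ∀ v : V n, v ≠ 0 → ⟪v, u⟫ = 0 → 0 < hessQ n G u v v

/-- Capillary (Robin) boundary condition: `∂_{n+1}G = 0` on `∂S^n_θ`. -/
def IsCapillaryF (n : ℕ) (θ : ℝ) (G : V n → ℝ) : Prop :=
  ∀ u ∈ sphCapBdry n θ, fderiv ℝ G u (Etop n) = 0

/-- Reflection negating the horizontal coordinates. -/
def horizNeg (n : ℕ) (ζ : V n) : V n := (2 * ζ (Fin.last n)) • Etop n - ζ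

/-- Support function of a set. -/
def suppFn (n : ℕ) (K : Set (V n)) (u : V n) : ℝ := sSup ((fun y => ⟪u, y⟫) '' K)

/-- Relative interior (within the hyperplane `{x_{n+1}=0}`) of the base `K ∩ {x_{n+1}=0}`. -/
def relintBase (n : ℕ) (K : Set (V n)) : Set (V n) :=
  {x | x (Fin.last n) = 0 ∧ ∃ ε > 0, ∀ y : V n, y (Fin.last n) = 0 → ‖y - x‖ < ε → y ∈ K}

/-- A `θ`-capillary convex body. -/
def IsCapBody (n : ℕ) (θ : ℝ) (K : Set (V n)) : Prop :=
  IsCompact K ∧ Convex ℝ K ∧ (interior K).Nonempty ∧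
  (∀ x ∈ K, 0 ≤ x (Fin.last n)) ∧
  (∀ x ∈ K, 0 < x (Fin.last n) → ∀ u : V n, ‖u‖ = 1 → ⟪u, x⟫ = suppFn n K u →
    Real.cos θ ≤ u (Fin.last n)) ∧
  (∀ v : V n, ‖v‖ = 1 → v (Fin.last n) = 0 →
    suppFn n K (Real.sin θ • v + Real.cos θ • Etop n) = Real.sin θ * suppFn n K v) ∧
  (relintBase n K).Nonempty

/-- `ψ` is one of `x²`, `x^p (p<0)`, `-log x`. -/
def PsiOK (ψ : ℝ → ℝ) : Prop :=
  (ψ = fun x : ℝ => x ^ 2) ∨ (∃ p : ℝ, p < 0 ∧ ψ = fun x : ℝ => x ^ p) ∨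
    (ψ = fun x : ℝ => -Real.log x)

/-!
A lower bound on `σ_k` keeps the Hessian of `G` away from zero: `‖D²G‖ ≥ a` on `S^n_θ`. Restrict
`G` to the affine hyperplane through `E = E_{n+1}`. The tangential Hessian has an eigenvalue at
least `a / 4` there, so by the maximum principle the Taylor remainder
`G(E + x) - G(E) - DG(E)x` is at least `(a / 8)‖x‖²` at some horizontal `x` with `‖x‖ = sin θ`.

Along the vertical ray leaving a point of `∂S^n_θ`, the function `G` is convex with zero initial
slope, hence nondecreasing; by homogeneity this says `t G(E + x) ≤ G(E + t x)` for `0 < t ≤ 1`. The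
Hessian bound gives `G(E + t x) ≤ G(E) + t DG(E)x + A t²‖x‖² / 2`. The linear terms cancel between
these estimates, and `t = a / (8A)` leaves `(1 - t) G(E) ≥ a² sin² θ / (128 A)`.
-/

open Filter Topology

section Calculus

variable {E F : Type*} [NormedAddCommGroup E] [NormedSpace ℝ E] [NormedAddCommGroup F]
  [NormedSpace ℝ F]

lemma hasDerivAt_comp_add_smul {f : E → F} {x v : E} {r : ℝ}
    (hf : DifferentiableAt ℝ f (x + r • v)) :
    HasDerivAt (fun r : ℝ ↦ f (x + r • v)) (fderiv ℝ f (x + r • v) v) r := by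
  have hline : HasDerivAt (fun r : ℝ ↦ x + r • v) v r := by
    simpa using ((hasDerivAt_id r).smul_const v).const_add x
  exact hf.hasFDerivAt.comp_hasDerivAt r hline

lemma hasDerivAt_fderiv_comp_add_smul {f : E → F} {x v : E} {r : ℝ}
    (hf : ContDiffAt ℝ 2 f (x + r • v)) :
    HasDerivAt (fun r : ℝ ↦ fderiv ℝ f (x + r • v) v)
      (fderiv ℝ (fderiv ℝ f) (x + r • v) v v) r := by
  have hdf : DifferentiableAt ℝ (fderiv ℝ f) (x + r • v) :=
    (hf.fderiv_right (m := 1) (by norm_num)).differentiableAt (by norm_num)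
  simpa using (hasDerivAt_comp_add_smul hdf).clm_apply (hasDerivAt_const r v)

lemma monotoneOn_Ici_of_hasDerivAt_nonneg {f f' : ℝ → ℝ} {a : ℝ}
    (hf : ∀ r, a ≤ r → HasDerivAt f (f' r) r) (hf' : ∀ r, a < r → 0 ≤ f' r) :
    MonotoneOn f (Ici a) := by
  refine monotoneOn_of_hasDerivWithinAt_nonneg (f' := f') (convex_Ici a)
    (fun r hr ↦ (hf r hr).continuousAt.continuousWithinAt) ?_ ?_
  all_goals simp only [interior_Ici, mem_Ioi]
  · exact fun r hr ↦ (hf r hr.le).hasDerivWithinAt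
  · exact hf'

lemma monotoneOn_comp_add_smul_of_hessian_nonneg {f : E → ℝ} {x v : E}
    (hf : ∀ r : ℝ, 0 ≤ r → ContDiffAt ℝ 2 f (x + r • v)) (hfv : 0 ≤ fderiv ℝ f x v)
    (hfvv : ∀ r : ℝ, 0 < r → 0 ≤ fderiv ℝ (fderiv ℝ f) (x + r • v) v v) :
    MonotoneOn (fun r : ℝ ↦ f (x + r • v)) (Ici 0) := by
  have hmono : MonotoneOn (fun r : ℝ ↦ fderiv ℝ f (x + r • v) v) (Ici 0) :=
    monotoneOn_Ici_of_hasDerivAt_nonneg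
      (fun r hr ↦ hasDerivAt_fderiv_comp_add_smul (hf r hr)) hfvv
  refine monotoneOn_Ici_of_hasDerivAt_nonneg
    (fun r hr ↦ hasDerivAt_comp_add_smul ((hf r hr).differentiableAt two_ne_zero))
    fun r hr ↦ hfv.trans ?_
  simpa using hmono self_mem_Ici hr.le hr.le

lemma apply_add_le_of_hessian_le {f : E → ℝ} {x v : E} {C : ℝ}
    (hf : ∀ r ∈ Icc (0 : ℝ) 1, ContDiffAt ℝ 2 f (x + r • v))
    (hC : ∀ r ∈ Icc (0 : ℝ) 1, fderiv ℝ (fderiv ℝ f) (x + r • v) v v ≤ C) :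
    f (x + v) ≤ f x + fderiv ℝ f x v + C / 2 := by
  have hd₁ : ∀ r ∈ Icc (0 : ℝ) 1, HasDerivAt (fun r : ℝ ↦ f (x + r • v))
      (fderiv ℝ f (x + r • v) v) r :=
    fun r hr ↦ hasDerivAt_comp_add_smul ((hf r hr).differentiableAt two_ne_zero)
  have hd₂ : ∀ r ∈ Icc (0 : ℝ) 1, HasDerivAt (fun r : ℝ ↦ fderiv ℝ f (x + r • v) v)
      (fderiv ℝ (fderiv ℝ f) (x + r • v) v v) r :=
    fun r hr ↦ hasDerivAt_fderiv_comp_add_smul (hf r hr)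
  have hB₂ : ∀ r : ℝ, HasDerivAt (fun r ↦ fderiv ℝ f x v + C * r) C r := fun r ↦ by
    simpa using ((hasDerivAt_id r).const_mul C).const_add (fderiv ℝ f x v)
  have hB₁ : ∀ r : ℝ, HasDerivAt (fun r ↦ f x + fderiv ℝ f x v * r + C / 2 * r ^ 2)
      (fderiv ℝ f x v + C * r) r := fun r ↦ by
    refine ((((hasDerivAt_id' r).const_mul (fderiv ℝ f x v)).const_add (f x)).fun_add
      ((hasDerivAt_pow 2 r).const_mul (C / 2))).congr_deriv ?_
    push_cast
    ring
  have hslope : ∀ r ∈ Icc (0 : ℝ) 1, fderiv ℝ f (x + r • v) v ≤ fderiv ℝ f x v + C * r :=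
    fun r ↦ image_le_of_deriv_right_le_deriv_boundary
      (fun r hr ↦ (hd₂ r hr).continuousAt.continuousWithinAt)
      (fun r hr ↦ (hd₂ r (Ico_subset_Icc_self hr)).hasDerivWithinAt) (by simp)
      (fun r _ ↦ (hB₂ r).continuousAt.continuousWithinAt)
      (fun r _ ↦ (hB₂ r).hasDerivWithinAt) (fun r hr ↦ hC r (Ico_subset_Icc_self hr))
      (x := r)
  have hvalue := image_le_of_deriv_right_le_deriv_boundary
    (fun r hr ↦ (hd₁ r hr).continuousAt.continuousWithinAt)
    (fun r hr ↦ (hd₁ r (Ico_subset_Icc_self hr)).hasDerivWithinAt) (by simp)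
    (fun r _ ↦ (hB₁ r).continuousAt.continuousWithinAt)
    (fun r _ ↦ (hB₁ r).hasDerivWithinAt) (fun r hr ↦ hslope r (Ico_subset_Icc_self hr))
    (right_mem_Icc.2 zero_le_one)
  simpa using hvalue

lemma deriv_deriv_nonpos_of_isLocalMax {f : ℝ → ℝ} {a : ℝ} (hf : ContinuousAt f a)
    (hmax : IsLocalMax f a) : deriv (deriv f) a ≤ 0 := by
  by_contra! hpos
  have hmin : IsLocalMin f a := isLocalMin_of_deriv_deriv_pos hpos hmax.deriv_eq_zero hf
  have hconst : f =ᶠ[𝓝 a] fun _ ↦ f a := by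
    filter_upwards [hmax, hmin] with r h₁ h₂ using le_antisymm h₁ h₂
  simp [hconst.deriv.deriv_eq] at hpos

lemma fderiv_fderiv_apply_le_of_eventually_le {f : E → ℝ} {x v : E} {b c : ℝ}
    (hf : ContDiffAt ℝ 2 f x)
    (hle : ∀ᶠ r : ℝ in 𝓝 0, f (x + r • v) ≤ f x + b * r + c * r ^ 2) :
    fderiv ℝ (fderiv ℝ f) x v v ≤ 2 * c := by
  have hline : Tendsto (fun r : ℝ ↦ x + r • v) (𝓝 0) (𝓝 x) := by
    have hcont : Continuous fun r : ℝ ↦ x + r • v := by fun_prop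
    simpa using hcont.tendsto 0
  have hd₁ : ∀ᶠ r : ℝ in 𝓝 0, HasDerivAt (fun r ↦ f (x + r • v) - (b * r + c * r ^ 2))
      (fderiv ℝ f (x + r • v) v - (b + c * (2 * r))) r := by
    filter_upwards [hline.eventually (hf.eventually (by simp))] with r hr
    simpa using (hasDerivAt_comp_add_smul (hr.differentiableAt two_ne_zero)).fun_sub
      (((hasDerivAt_id' r).const_mul b).fun_add ((hasDerivAt_pow 2 r).const_mul c))
  have hd₂ : HasDerivAt (fun r : ℝ ↦ fderiv ℝ f (x + r • v) v - (b + c * (2 * r)))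
      (fderiv ℝ (fderiv ℝ f) x v v - c * 2) 0 := by
    have h := hasDerivAt_fderiv_comp_add_smul (f := f) (x := x) (v := v) (r := 0) (by simpa)
    simpa using h.fun_sub ((((hasDerivAt_id' (0 : ℝ)).const_mul 2).const_mul c).const_add b)
  have hmax : IsLocalMax (fun r : ℝ ↦ f (x + r • v) - (b * r + c * r ^ 2)) 0 := by
    filter_upwards [hle] with r hr
    simp only [zero_smul, add_zero]
    linarith
  have hderiv : deriv (fun r : ℝ ↦ f (x + r • v) - (b * r + c * r ^ 2)) =ᶠ[𝓝 0]
      fun r : ℝ ↦ fderiv ℝ f (x + r • v) v - (b + c * (2 * r)) :=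
    hd₁.mono fun r hr ↦ hr.deriv
  have := deriv_deriv_nonpos_of_isLocalMax hd₁.self_of_nhds.continuousAt hmax
  rw [hderiv.deriv_eq, hd₂.deriv] at this
  linarith

end Calculus

section Homogeneous

variable {𝕜 E F : Type*} [NontriviallyNormedField 𝕜] [NormedAddCommGroup E] [NormedSpace 𝕜 E]
  [NormedAddCommGroup F] [NormedSpace 𝕜 F] {f : E → F} {x : E} {l : 𝕜}

lemma fderiv_smul_eq_of_eventually (hl : l ≠ 0) (h : ∀ᶠ y in 𝓝 x, f (l • y) = l • f y) :
    fderiv 𝕜 f (l • x) = fderiv 𝕜 f x := by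
  have hderiv := EventuallyEq.fderiv_eq (𝕜 := 𝕜) h
  rw [fderiv_comp_smul] at hderiv
  exact smul_right_injective _ hl
    (hderiv.trans (congrFun (fderiv_const_smul_field (𝕜 := 𝕜) (f := f) l) x))

lemma smul_fderiv_smul_eq_of_eventually (h : ∀ᶠ y in 𝓝 x, f (l • y) = f y) :
    l • fderiv 𝕜 f (l • x) = fderiv 𝕜 f x := by
  rw [← fderiv_comp_smul]
  exact EventuallyEq.fderiv_eq h

lemma norm_fderiv_eq_of_eventually (h : ∀ᶠ y in 𝓝 x, f (l • y) = f y) :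
    ‖fderiv 𝕜 f x‖ = ‖l‖ * ‖fderiv 𝕜 f (l • x)‖ := by
  rw [← smul_fderiv_smul_eq_of_eventually h, norm_smul]

lemma fderiv_apply_self_eq_zero_of_eventually (h : ∀ᶠ l : 𝕜 in 𝓝 1, f (l • x) = f x) :
    fderiv 𝕜 f x x = 0 := by
  by_cases hf : DifferentiableAt 𝕜 f x
  · have hray : HasDerivAt (fun l : 𝕜 ↦ l • x) x 1 := by
      simpa using (hasDerivAt_id (1 : 𝕜)).smul_const x
    have hf' : HasFDerivAt f (fderiv 𝕜 f x) ((1 : 𝕜) • x) := by simpa using hf.hasFDerivAt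
    exact (hf'.comp_hasDerivAt 1 hray).unique
      ((hasDerivAt_const 1 (f x)).congr_of_eventuallyEq h)
  · rw [fderiv_zero_of_not_differentiableAt hf]
    rfl

end Homogeneous

section InnerProductSpace

variable {E : Type*} [NormedAddCommGroup E]

lemma opNorm_le_of_symm_of_nonneg [NormedSpace ℝ E] {B : E →L[ℝ] E →L[ℝ] ℝ} {C : ℝ}
    (hsymm : ∀ v w, B v w = B w v) (hnonneg : ∀ v, 0 ≤ B v v) (hC : 0 ≤ C)
    (hle : ∀ v, B v v ≤ C * ‖v‖ ^ 2) : ‖B‖ ≤ C := by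
  refine B.opNorm_le_bound₂ hC fun v w ↦ abs_le_of_sq_le_sq ?_ (by positivity)
  have hcs : B v w * B w v ≤ B v v * B w w :=
    LinearMap.BilinForm.apply_mul_apply_le_of_forall_zero_le
      (ContinuousLinearMap.toLinearMap₁₂ B) hnonneg v w
  calc B v w ^ 2 = B v w * B w v := by rw [hsymm w v, sq]
    _ ≤ B v v * B w w := hcs
    _ ≤ (C * ‖v‖ ^ 2) * (C * ‖w‖ ^ 2) :=
        mul_le_mul (hle v) (hle w) (hnonneg w) (by positivity)
    _ = (C * ‖v‖ * ‖w‖) ^ 2 := by ring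

variable [InnerProductSpace ℝ E]

lemma norm_sub_inner_smul_le {e y : E} (he : ‖e‖ = 1) (hey : ⟪e, y⟫ = 1) (w : E) :
    ‖w - ⟪e, w⟫ • y‖ ≤ ‖w‖ * ‖y‖ := by
  have hcs := real_inner_mul_inner_self_le (w - ⟪e, w⟫ • e) (y - e)
  have hinner : ⟪w - ⟪e, w⟫ • e, y - e⟫ = ⟪w, y⟫ - ⟪e, w⟫ := by
    simp only [inner_sub_left, inner_sub_right, real_inner_smul_left, real_inner_self_eq_norm_sq,
      he, hey, real_inner_comm e w]
    ring
  have hnorm_left : ⟪w - ⟪e, w⟫ • e, w - ⟪e, w⟫ • e⟫ = ‖w‖ ^ 2 - ⟪e, w⟫ ^ 2 := by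
    rw [real_inner_self_eq_norm_sq, norm_sub_sq_real, norm_smul, real_inner_smul_right, he,
      real_inner_comm, mul_one, norm_eq_abs, sq_abs]
    ring
  have hnorm_right : ⟪y - e, y - e⟫ = ‖y‖ ^ 2 - 1 := by
    simp only [inner_sub_left, inner_sub_right, real_inner_self_eq_norm_sq, he, hey,
      real_inner_comm e y]
    ring
  rw [hinner, hnorm_left, hnorm_right] at hcs
  refine abs_le_of_sq_le_sq' ?_ (by positivity) |>.2
  rw [norm_sub_sq_real, norm_smul, real_inner_smul_right, mul_pow, norm_eq_abs, sq_abs]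
  nlinarith [sq_nonneg ⟪w, y⟫]

lemma opNorm_le_of_le_on_orthogonal {B : E →L[ℝ] E →L[ℝ] ℝ} {e y : E} {C : ℝ}
    (hsymm : ∀ v w, B v w = B w v) (hnonneg : ∀ v, 0 ≤ B v v) (hBy : B y = 0) (he : ‖e‖ = 1)
    (hey : ⟪e, y⟫ = 1) (hC : 0 ≤ C) (hle : ∀ v ∈ (ℝ ∙ e)ᗮ, B v v ≤ C * ‖v‖ ^ 2) :
    ‖B‖ ≤ C * ‖y‖ ^ 2 := by
  refine opNorm_le_of_symm_of_nonneg hsymm hnonneg (by positivity) fun w ↦ ?_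
  have horth : w - ⟪e, w⟫ • y ∈ (ℝ ∙ e)ᗮ := by
    simp [Submodule.mem_orthogonal_singleton_iff_inner_right, inner_sub_right,
      real_inner_smul_right, hey]
  have hBw : B (w - ⟪e, w⟫ • y) (w - ⟪e, w⟫ • y) = B w w := by
    simp [hBy, hsymm w y]
  calc B w w ≤ C * ‖w - ⟪e, w⟫ • y‖ ^ 2 := hBw ▸ hle _ horth
    _ ≤ C * (‖w‖ * ‖y‖) ^ 2 := by gcongr; exact norm_sub_inner_smul_le he hey w
    _ = C * ‖y‖ ^ 2 * ‖w‖ ^ 2 := by ring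

lemma exists_norm_eq_and_mul_sq_le_sub_tangent [FiniteDimensional ℝ E] {f : E → ℝ} {p : E}
    {W : Submodule ℝ E} {c ρ : ℝ} (hρ : 0 ≤ ρ)
    (hf : ∀ x ∈ W, ‖x‖ ≤ ρ → ContDiffAt ℝ 2 f (p + x))
    (hW : ∀ x ∈ W, ‖x‖ < ρ → ∃ v ∈ W, 2 * c * ‖v‖ ^ 2 < fderiv ℝ (fderiv ℝ f) (p + x) v v) :
    ∃ x ∈ W, ‖x‖ = ρ ∧ c * ρ ^ 2 ≤ f (p + x) - f p - fderiv ℝ f p x := by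
  set K : Set E := (W : Set E) ∩ Metric.closedBall 0 ρ
  have hK : IsCompact K := (isCompact_closedBall 0 ρ).inter_left W.closed_of_finiteDimensional
  have hK₀ : 0 ∈ K := ⟨W.zero_mem, by simpa⟩
  set q : E → ℝ := fun x ↦ f (p + x) - (f p + fderiv ℝ f p x + c * ‖x‖ ^ 2) with hq
  have hqK : ContinuousOn q K := by
    have hfK : ContinuousOn (fun x ↦ f (p + x)) K := fun x hx ↦
      ((hf x hx.1 (mem_closedBall_zero_iff.1 hx.2)).continuousAt.comp' (by fun_prop)
        ).continuousWithinAt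
    exact hfK.sub (Continuous.continuousOn (by fun_prop))
  obtain ⟨x, ⟨hxW, hxρ⟩, hmax⟩ := hK.exists_isMaxOn ⟨0, hK₀⟩ hqK
  rw [mem_closedBall_zero_iff] at hxρ
  have hqx : 0 ≤ q x := by simpa [hq] using hmax hK₀
  rcases hxρ.eq_or_lt with hxρ | hxρ
  · refine ⟨x, hxW, hxρ, ?_⟩
    simp only [hq, hxρ] at hqx
    linarith
  · obtain ⟨v, hvW, hv⟩ := hW x hxW hxρ
    refine absurd (fderiv_fderiv_apply_le_of_eventually_le (c := c * ‖v‖ ^ 2)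
      (b := fderiv ℝ f p v + 2 * c * ⟪x, v⟫) (hf x hxW hxρ.le) ?_) (by linarith)
    have hcont : Continuous fun r : ℝ ↦ ‖x + r • v‖ := by fun_prop
    have hnear : ∀ᶠ r : ℝ in 𝓝 0, ‖x + r • v‖ < ρ :=
      (hcont.tendsto 0).eventually_lt_const (by simpa)
    filter_upwards [hnear] with r hr
    have hqr : q (x + r • v) ≤ q x :=
      hmax ⟨W.add_mem hxW (W.smul_mem r hvW), by simpa using hr.le⟩
    simp only [hq, map_add, map_smul, smul_eq_mul, norm_add_sq_real, inner_smul_right, norm_smul,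
      mul_pow, norm_eq_abs, sq_abs, ← add_assoc] at hqr
    linarith

end InnerProductSpace

section Charpoly

lemma continuous_charpoly_coeff {R ι : Type*} [CommRing R] [TopologicalSpace R]
    [IsTopologicalSemiring R] [Fintype ι] [DecidableEq ι] (m : ℕ) :
    Continuous fun M : Matrix ι ι R ↦ M.charpoly.coeff m := by
  have hcoeff (M : Matrix ι ι R) : M.charpoly.coeff m =
      MvPolynomial.eval (fun ij : ι × ι ↦ M ij.1 ij.2) ((Matrix.charpoly.univ R ι).coeff m) :=
    (Matrix.charpoly.univ_coeff_eval₂Hom ι (RingHom.id R) (fun ij ↦ M ij.1 ij.2) m).symm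
  simp_rw [hcoeff]
  exact (MvPolynomial.continuous_eval _).comp (by fun_prop)

lemma exists_pos_forall_le_norm_of_lt {E : Type*} [SeminormedAddCommGroup E] {σ : E → ℝ} {c : ℝ}
    (hσ : ContinuousAt σ 0) (hc : σ 0 < c) : ∃ a > 0, ∀ x, c ≤ σ x → a ≤ ‖x‖ := by
  obtain ⟨a, ha, hball⟩ :=
    Metric.eventually_nhds_iff_ball.1 (hσ.tendsto.eventually_lt_const hc)
  exact ⟨a, ha, fun x hx ↦
    not_lt.1 fun hlt ↦ (hball x (mem_ball_zero_iff.2 hlt)).not_ge hx⟩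

lemma exists_pos_le_norm_fderiv_fderiv_of_le_sigmaElem (n : ℕ) {k : ℕ} (hk : k ≠ 0) {c₀ : ℝ}
    (hc₀ : 0 < c₀) : ∃ a > 0, ∀ (G : V n → ℝ) (u : V n),
      c₀ ≤ sigmaElem n k G u → a ≤ ‖fderiv ℝ (fderiv ℝ G) u‖ := by
  set M : (V n →L[ℝ] V n →L[ℝ] ℝ) → Matrix (Fin (n + 1)) (Fin (n + 1)) ℝ := fun B i j ↦
    B (EuclideanSpace.single i 1) (EuclideanSpace.single j 1)
  set σ : (V n →L[ℝ] V n →L[ℝ] ℝ) → ℝ := fun B ↦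
    (-1) ^ k * (M B).charpoly.coeff (n + 1 - k)
  have hM : Continuous M := by fun_prop
  have hσ : Continuous σ := ((continuous_charpoly_coeff _).comp hM).const_mul _
  have hσ₀ : σ 0 < c₀ := by
    have hM₀ : M 0 = 0 := rfl
    have hdeg : n + 1 - k ≠ n + 1 := by omega
    simpa [σ, hM₀, Polynomial.coeff_X_pow, hdeg] using hc₀
  obtain ⟨a, ha, hσa⟩ := exists_pos_forall_le_norm_of_lt (E := V n →L[ℝ] V n →L[ℝ] ℝ)
    hσ.continuousAt hσ₀
  exact ⟨a, ha, fun G u hu ↦ hσa (fderiv ℝ (fderiv ℝ G) u) hu⟩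

end Charpoly

section SphericalCap

variable {n : ℕ} {θ : ℝ}

/-- The horizontal hyperplane `{x_{n+1} = 0}`, as a linear subspace. -/
def horizontal (n : ℕ) : Submodule ℝ (V n) := (ℝ ∙ Etop n)ᗮ

/-- For `0 < θ < π`, the interior of `coneCap n θ`, written as an inequality. Differentiating the
homogeneity of an extension requires all nearby points to lie in the cone, hence an open set. -/
def openCone (n : ℕ) (θ : ℝ) : Set (V n) := {x | Real.cos θ * ‖x‖ < x (Fin.last n)}

lemma norm_Etop : ‖Etop n‖ = 1 := by simp [Etop]

lemma Etop_apply_last : Etop n (Fin.last n) = 1 := by simp [Etop]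

lemma inner_Etop (x : V n) : ⟪Etop n, x⟫ = x (Fin.last n) := by
  simp [Etop, EuclideanSpace.inner_single_left]

lemma mem_horizontal {x : V n} : x ∈ horizontal n ↔ x (Fin.last n) = 0 := by
  rw [horizontal, Submodule.mem_orthogonal_singleton_iff_inner_right, inner_Etop]

lemma norm_add_smul_Etop_sq {x : V n} (hx : x ∈ horizontal n) (c : ℝ) :
    ‖x + c • Etop n‖ ^ 2 = ‖x‖ ^ 2 + c ^ 2 := by
  rw [norm_add_sq_real, real_inner_smul_right, real_inner_comm, inner_Etop, mem_horizontal.1 hx,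
    norm_smul, norm_Etop, norm_eq_abs, mul_one, sq_abs]
  ring

lemma norm_Etop_add_sq {x : V n} (hx : x ∈ horizontal n) :
    ‖Etop n + x‖ ^ 2 = 1 + ‖x‖ ^ 2 := by
  simpa [add_comm] using norm_add_smul_Etop_sq hx 1

lemma Etop_mem_sphCap : Etop n ∈ sphCap n θ :=
  ⟨norm_Etop, Etop_apply_last.symm ▸ cos_le_one θ⟩

lemma add_cos_smul_Etop_mem_sphCapBdry {x : V n} (hx : x ∈ horizontal n) (hxθ : ‖x‖ = Real.sin θ) :
    x + Real.cos θ • Etop n ∈ sphCapBdry n θ := by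
  refine ⟨?_, ?_⟩
  · rw [← pow_eq_one_iff_of_nonneg (norm_nonneg _) two_ne_zero, norm_add_smul_Etop_sq hx, hxθ,
      sin_sq_add_cos_sq]
  · simp [mem_horizontal.1 hx, Etop_apply_last]

lemma sphCapBdry_subset_sphCap : sphCapBdry n θ ⊆ sphCap n θ := fun _ hu ↦ ⟨hu.1, hu.2.ge⟩

lemma sphCap_subset_coneCap : sphCap n θ ⊆ coneCap n θ :=
  fun u hu ↦ ⟨1, one_pos, u, hu, (one_smul ℝ u).symm⟩

lemma sub_mem_capCap {u : V n} (hu : u ∈ sphCap n θ) :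
    u - Real.cos θ • Etop n ∈ capCap n θ := by
  refine ⟨?_, by simpa using hu.1⟩
  simpa [Etop_apply_last] using hu.2

lemma isOpen_openCone : IsOpen (openCone n θ) :=
  isOpen_lt (by fun_prop) (by fun_prop)

lemma norm_pos_of_mem_openCone {x : V n} (hx : x ∈ openCone n θ) : 0 < ‖x‖ := by
  refine norm_pos_iff.2 ?_
  rintro rfl
  simp [openCone] at hx

lemma inv_norm_smul_mem_sphCap {x : V n} (hx : x ∈ openCone n θ) : ‖x‖⁻¹ • x ∈ sphCap n θ := by
  have hpos := norm_pos_of_mem_openCone hx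
  refine ⟨?_, ?_⟩
  · rw [norm_smul, norm_inv, norm_norm, inv_mul_cancel₀ hpos.ne']
  · rw [PiLp.smul_apply, smul_eq_mul, inv_mul_eq_div, le_div_iff₀ hpos]
    exact hx.le

lemma openCone_subset_coneCap : openCone n θ ⊆ coneCap n θ := fun x hx ↦
  ⟨‖x‖, norm_pos_of_mem_openCone hx, _, inv_norm_smul_mem_sphCap hx,
    (smul_inv_smul₀ (norm_pos_of_mem_openCone hx).ne' x).symm⟩

lemma add_smul_Etop_mem_openCone (hθ : θ ∈ Ioo 0 π) {b : V n} (hb : b ∈ sphCapBdry n θ) {r : ℝ}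
    (hr : 0 < r) : b + r • Etop n ∈ openCone n θ := by
  have hcos : |Real.cos θ| < 1 := by
    rw [← sq_lt_one_iff_abs_lt_one, ← sin_sq_add_cos_sq θ]
    exact lt_add_of_pos_left _ (pow_pos (sin_pos_of_mem_Ioo hθ) 2)
  have hnorm : |‖b + r • Etop n‖ - 1| ≤ r := by
    simpa [hb.1, norm_smul, norm_Etop, abs_of_pos hr] using abs_norm_sub_norm_le (b + r • Etop n) b
  have hmul : Real.cos θ * (‖b + r • Etop n‖ - 1) ≤ |Real.cos θ| * r :=
    calc _ ≤ |Real.cos θ * (‖b + r • Etop n‖ - 1)| := le_abs_self _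
      _ = |Real.cos θ| * |‖b + r • Etop n‖ - 1| := abs_mul _ _
      _ ≤ |Real.cos θ| * r := by gcongr
  calc Real.cos θ * ‖b + r • Etop n‖
      = Real.cos θ + Real.cos θ * (‖b + r • Etop n‖ - 1) := by ring
    _ ≤ Real.cos θ + |Real.cos θ| * r := by gcongr
    _ < Real.cos θ + r := by gcongr; exact mul_lt_of_lt_one_left hr hcos
    _ = (b + r • Etop n) (Fin.last n) := by simp [hb.2, Etop_apply_last]

lemma Etop_add_mem_openCone (hθ : θ ∈ Ioo 0 π) {x : V n} (hx : x ∈ horizontal n)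
    (hxθ : ‖x‖ ≤ Real.sin θ) : Etop n + x ∈ openCone n θ := by
  have hlast : (Etop n + x) (Fin.last n) = 1 := by simp [Etop_apply_last, mem_horizontal.1 hx]
  rw [openCone, mem_ofPred_eq, hlast]
  refine lt_of_pow_lt_pow_left₀ 2 zero_le_one ?_
  have hsin : 0 < Real.sin θ ^ 2 := pow_pos (sin_pos_of_mem_Ioo hθ) 2
  calc (Real.cos θ * ‖Etop n + x‖) ^ 2 = Real.cos θ ^ 2 * (1 + ‖x‖ ^ 2) := by
        rw [mul_pow, norm_Etop_add_sq hx]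
    _ ≤ Real.cos θ ^ 2 * (1 + Real.sin θ ^ 2) := by gcongr
    _ = 1 - (Real.sin θ ^ 2) ^ 2 := by rw [cos_sq']; ring
    _ < 1 ^ 2 := by rw [one_pow]; exact sub_lt_self 1 (pow_pos hsin 2)

end SphericalCap

namespace IsHomExt

variable {n : ℕ} {θ : ℝ} {m : ℕ∞} {g G : V n → ℝ} {x : V n}

lemma of_le {m' : ℕ∞} (h : IsHomExt n θ m' g G) (hm : m ≤ m') : IsHomExt n θ m g G :=
  let ⟨⟨U, hU, hsub, hG⟩, hhom⟩ := h
  ⟨⟨U, hU, hsub, hG.of_le (mod_cast hm)⟩, hhom⟩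

lemma contDiffAt (h : IsHomExt n θ m g G) (hx : x ∈ coneCap n θ) : ContDiffAt ℝ m G x :=
  let ⟨⟨_, hU, hsub, hG⟩, _⟩ := h
  hG.contDiffAt (hU.mem_nhds (hsub hx))

lemma apply_smul (h : IsHomExt n θ m g G) {l : ℝ} (hl : 0 < l) (hx : x ∈ coneCap n θ) :
    G (l • x) = l * G x := by
  obtain ⟨r, hr, u, hu, rfl⟩ := hx
  rw [smul_smul, h.2.1 _ (mul_pos hl hr) u hu, h.2.1 r hr u hu, mul_assoc]

lemma fderiv_smul (h : IsHomExt n θ m g G) {l : ℝ} (hl : 0 < l) (hx : x ∈ openCone n θ) :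
    fderiv ℝ G (l • x) = fderiv ℝ G x := by
  refine fderiv_smul_eq_of_eventually hl.ne' ?_
  filter_upwards [isOpen_openCone.mem_nhds hx] with y hy
    using h.apply_smul hl (openCone_subset_coneCap hy)

lemma eventually_fderiv_smul (h : IsHomExt n θ m g G) {l : ℝ} (hl : 0 < l)
    (hx : x ∈ openCone n θ) : ∀ᶠ y in 𝓝 x, fderiv ℝ G (l • y) = fderiv ℝ G y := by
  filter_upwards [isOpen_openCone.mem_nhds hx] with y hy using h.fderiv_smul hl hy

lemma smul_hessian_smul (h : IsHomExt n θ m g G) {l : ℝ} (hl : 0 < l) (hx : x ∈ openCone n θ) :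
    l • fderiv ℝ (fderiv ℝ G) (l • x) = fderiv ℝ (fderiv ℝ G) x :=
  smul_fderiv_smul_eq_of_eventually (h.eventually_fderiv_smul hl hx)

lemma norm_mul_norm_hessian (h : IsHomExt n θ m g G) (hx : x ∈ openCone n θ) :
    ‖x‖ * ‖fderiv ℝ (fderiv ℝ G) x‖ = ‖fderiv ℝ (fderiv ℝ G) (‖x‖⁻¹ • x)‖ := by
  have hpos := norm_pos_of_mem_openCone hx
  rw [norm_fderiv_eq_of_eventually (h.eventually_fderiv_smul (inv_pos.2 hpos) hx), norm_inv,
    norm_norm, mul_inv_cancel_left₀ hpos.ne']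

lemma hessian_apply_self (h : IsHomExt n θ m g G) (hx : x ∈ openCone n θ) :
    fderiv ℝ (fderiv ℝ G) x x = 0 := by
  refine fderiv_apply_self_eq_zero_of_eventually ?_
  filter_upwards [lt_mem_nhds one_pos] with l hl using h.fderiv_smul hl hx

lemma hessian_symm (h : IsHomExt n θ 2 g G) (hx : x ∈ openCone n θ) (v w : V n) :
    fderiv ℝ (fderiv ℝ G) x v w = fderiv ℝ (fderiv ℝ G) x w v :=
  ((h.contDiffAt (openCone_subset_coneCap hx)).isSymmSndFDerivAt (by simp)).eq v w

lemma hessian_nonneg (h : IsHomExt n θ m g G) (hτ : TauNonneg n θ G) (hx : x ∈ openCone n θ)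
    (v : V n) : 0 ≤ fderiv ℝ (fderiv ℝ G) x v v := by
  have hpos := inv_pos.2 (norm_pos_of_mem_openCone hx)
  rw [← h.smul_hessian_smul hpos hx]
  exact mul_nonneg hpos.le (hτ _ (inv_norm_smul_mem_sphCap hx) v)

lemma monotoneOn_vertical (h : IsHomExt n θ 2 g G) (hθ : θ ∈ Ioo 0 π) (hτ : TauNonneg n θ G)
    (hcap : IsCapillaryF n θ G) {b : V n} (hb : b ∈ sphCapBdry n θ) :
    MonotoneOn (fun r : ℝ ↦ G (b + r • Etop n)) (Ici 0) := by
  refine monotoneOn_comp_add_smul_of_hessian_nonneg (fun r hr ↦ h.contDiffAt ?_) (hcap b hb).ge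
    fun r hr ↦ h.hessian_nonneg hτ (add_smul_Etop_mem_openCone hθ hb hr) _
  rcases hr.eq_or_lt with rfl | hr
  · simpa using sphCap_subset_coneCap (sphCapBdry_subset_sphCap hb)
  · exact openCone_subset_coneCap (add_smul_Etop_mem_openCone hθ hb hr)

-- `E + x` and `t⁻¹ (E + t x)` lie on the vertical ray from the boundary point `x + cos θ E`.
lemma mul_apply_Etop_add_le (h : IsHomExt n θ 2 g G) (hθ : θ ∈ Ioo 0 π) (hτ : TauNonneg n θ G)
    (hcap : IsCapillaryF n θ G) (hx : x ∈ horizontal n) (hxθ : ‖x‖ = Real.sin θ) {t : ℝ}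
    (ht : t ∈ Ioc 0 1) : t * G (Etop n + x) ≤ G (Etop n + t • x) := by
  have hb := add_cos_smul_Etop_mem_sphCapBdry hx hxθ
  have hcos : 0 ≤ 1 - Real.cos θ := sub_nonneg.2 (cos_le_one θ)
  have ht' : 1 - Real.cos θ ≤ t⁻¹ - Real.cos θ := by gcongr; exact (one_le_inv₀ ht.1).2 ht.2
  have hray (r : ℝ) : x + Real.cos θ • Etop n + (r - Real.cos θ) • Etop n = r • Etop n + x := by
    module
  have hmono := h.monotoneOn_vertical hθ hτ hcap hb hcos (hcos.trans ht') ht'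
  simp only [hray, one_smul] at hmono
  have htx : Etop n + t • x ∈ openCone n θ :=
    Etop_add_mem_openCone hθ ((horizontal n).smul_mem t hx) (by
      rw [norm_smul, norm_of_nonneg ht.1.le, hxθ]
      exact mul_le_of_le_one_left (sin_pos_of_mem_Ioo hθ).le ht.2)
  calc t * G (Etop n + x) ≤ t * G (t⁻¹ • Etop n + x) := by have := ht.1; gcongr
    _ = t * G (t⁻¹ • (Etop n + t • x)) := by rw [smul_add, inv_smul_smul₀ ht.1.ne']
    _ = G (Etop n + t • x) := by
        rw [h.apply_smul (inv_pos.2 ht.1) (openCone_subset_coneCap htx),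
          mul_inv_cancel_left₀ ht.1.ne']

lemma exists_horizontal_lt_hessian (h : IsHomExt n θ 2 g G) (hθ : θ ∈ Ioo 0 π)
    (hτ : TauNonneg n θ G) {a : ℝ} (ha : 0 < a)
    (hlow : ∀ u ∈ sphCap n θ, a ≤ ‖fderiv ℝ (fderiv ℝ G) u‖) (hx : x ∈ horizontal n)
    (hxθ : ‖x‖ ≤ Real.sin θ) :
    ∃ v ∈ horizontal n, a / 4 * ‖v‖ ^ 2 < fderiv ℝ (fderiv ℝ G) (Etop n + x) v v := by
  by_contra! hle
  set y := Etop n + x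
  have hy : y ∈ openCone n θ := Etop_add_mem_openCone hθ hx hxθ
  have hinner : ⟪Etop n, y⟫ = 1 := by
    simp [y, inner_Etop, Etop_apply_last, mem_horizontal.1 hx]
  have hhess : ‖fderiv ℝ (fderiv ℝ G) y‖ ≤ a / 4 * ‖y‖ ^ 2 :=
    opNorm_le_of_le_on_orthogonal (h.hessian_symm hy) (h.hessian_nonneg hτ hy)
      (h.hessian_apply_self hy) norm_Etop hinner (by positivity) hle
  have hnorm_sq : ‖y‖ ^ 2 ≤ 2 := by
    have := pow_le_one₀ (n := 2) (norm_nonneg x) (hxθ.trans (sin_le_one θ))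
    linarith [norm_Etop_add_sq hx]
  have hnorm : ‖y‖ < 2 := by nlinarith
  have hlow_y : a ≤ ‖y‖ * (a / 4 * ‖y‖ ^ 2) :=
    calc a ≤ ‖y‖ * ‖fderiv ℝ (fderiv ℝ G) y‖ :=
          (hlow _ (inv_norm_smul_mem_sphCap hy)).trans_eq (h.norm_mul_norm_hessian hy).symm
      _ ≤ ‖y‖ * (a / 4 * ‖y‖ ^ 2) := by gcongr
  refine hlow_y.not_gt ?_
  calc ‖y‖ * (a / 4 * ‖y‖ ^ 2) ≤ ‖y‖ * (a / 4 * 2) := by gcongr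
    _ < 2 * (a / 4 * 2) := by gcongr
    _ = a := by ring

lemma apply_Etop_add_le (h : IsHomExt n θ 2 g G) (hθ : θ ∈ Ioo 0 π) {A : ℝ}
    (hupp : ∀ u ∈ sphCap n θ, ‖fderiv ℝ (fderiv ℝ G) u‖ ≤ A) (hx : x ∈ horizontal n)
    (hxθ : ‖x‖ ≤ Real.sin θ) :
    G (Etop n + x) ≤ G (Etop n) + fderiv ℝ G (Etop n) x + A * ‖x‖ ^ 2 / 2 := by
  have hmem (r : ℝ) (hr : r ∈ Icc (0 : ℝ) 1) :
      r • x ∈ horizontal n ∧ Etop n + r • x ∈ openCone n θ := by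
    have hrx := (horizontal n).smul_mem r hx
    refine ⟨hrx, Etop_add_mem_openCone hθ hrx (le_trans ?_ hxθ)⟩
    rw [norm_smul, norm_of_nonneg hr.1]
    exact mul_le_of_le_one_left (norm_nonneg x) hr.2
  refine apply_add_le_of_hessian_le
    (fun r hr ↦ h.contDiffAt (openCone_subset_coneCap (hmem r hr).2)) fun r hr ↦ ?_
  obtain ⟨hrx, hy⟩ := hmem r hr
  have hnorm : 1 ≤ ‖Etop n + r • x‖ := by
    rw [← one_le_sq_iff₀ (norm_nonneg _), norm_Etop_add_sq hrx]
    exact le_add_of_nonneg_right (sq_nonneg _)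
  have hhess : ‖fderiv ℝ (fderiv ℝ G) (Etop n + r • x)‖ ≤ A :=
    calc _ ≤ ‖Etop n + r • x‖ * ‖fderiv ℝ (fderiv ℝ G) (Etop n + r • x)‖ :=
          le_mul_of_one_le_left (by positivity) hnorm
      _ = _ := h.norm_mul_norm_hessian hy
      _ ≤ A := hupp _ (inv_norm_smul_mem_sphCap hy)
  calc fderiv ℝ (fderiv ℝ G) (Etop n + r • x) x x
      ≤ ‖fderiv ℝ (fderiv ℝ G) (Etop n + r • x)‖ * ‖x‖ * ‖x‖ :=
        (le_norm_self _).trans (ContinuousLinearMap.le_opNorm₂ _ x x)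
    _ ≤ A * ‖x‖ * ‖x‖ := by gcongr
    _ = A * ‖x‖ ^ 2 := by ring

lemma sq_mul_sin_sq_div_le_apply_Etop (h : IsHomExt n θ 2 g G) (hθ : θ ∈ Ioo 0 π)
    (hτ : TauNonneg n θ G) (hcap : IsCapillaryF n θ G) {a A : ℝ} (ha : 0 < a)
    (hlow : ∀ u ∈ sphCap n θ, a ≤ ‖fderiv ℝ (fderiv ℝ G) u‖)
    (hupp : ∀ u ∈ sphCap n θ, ‖fderiv ℝ (fderiv ℝ G) u‖ ≤ A) :
    a ^ 2 * Real.sin θ ^ 2 / (128 * A) ≤ G (Etop n) := by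
  have haA : a ≤ A := (hlow _ Etop_mem_sphCap).trans (hupp _ Etop_mem_sphCap)
  have hA : 0 < A := ha.trans_le haA
  have hsin : 0 < Real.sin θ := sin_pos_of_mem_Ioo hθ
  obtain ⟨x, hx, hxθ, htangent⟩ := exists_norm_eq_and_mul_sq_le_sub_tangent (c := a / 8) hsin.le
    (fun x hx hxθ ↦ h.contDiffAt (openCone_subset_coneCap (Etop_add_mem_openCone hθ hx hxθ)))
    fun x hx hxθ ↦ by
      simpa only [show 2 * (a / 8) = a / 4 by ring] using
        h.exists_horizontal_lt_hessian hθ hτ ha hlow hx hxθ.le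
  set t := a / (8 * A) with ht_def
  have ht : t ∈ Ioc 0 1 := ⟨by positivity, (div_le_one (by positivity)).2 (by linarith)⟩
  have htx : ‖t • x‖ = t * Real.sin θ := by rw [norm_smul, norm_of_nonneg ht.1.le, hxθ]
  have hray := h.mul_apply_Etop_add_le hθ hτ hcap hx hxθ ht
  have htaylor := h.apply_Etop_add_le hθ hupp ((horizontal n).smul_mem t hx)
    (htx.trans_le (mul_le_of_le_one_left hsin.le ht.2))
  rw [htx, map_smul, smul_eq_mul] at htaylor
  have hmain : a ^ 2 * Real.sin θ ^ 2 / (128 * A) ≤ (1 - t) * G (Etop n) :=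
    calc a ^ 2 * Real.sin θ ^ 2 / (128 * A)
        = t * (a / 8 * Real.sin θ ^ 2) - A * (t * Real.sin θ) ^ 2 / 2 := by
          rw [ht_def]; field_simp; ring
      _ ≤ (1 - t) * G (Etop n) := by
          linarith [mul_le_mul_of_nonneg_left htangent ht.1.le]
  have hG : 0 ≤ G (Etop n) := by
    have hbound : 0 < a ^ 2 * Real.sin θ ^ 2 / (128 * A) := by positivity
    have ht1 : 0 ≤ 1 - t := by linarith [ht.2]
    exact (pos_of_mul_pos_right (hbound.trans_le hmain) ht1).le
  linarith [mul_nonneg ht.1.le hG]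

end IsHomExt

theorem capillary_noncollapsing_vertical_general {n k : ℕ} (hk : k ∈ Icc 1 n) {θ : ℝ}
    (hθ : θ ∈ Ioo 0 π) {A c₀ : ℝ} (hA : 0 < A) (hc₀ : 0 < c₀) :
    ∃ c > 0, ∀ g G : V n → ℝ, IsHomExt n θ 2 g G → IsCapillaryF n θ G → TauNonneg n θ G →
      (∀ u ∈ sphCap n θ, ‖fderiv ℝ (fderiv ℝ G) u‖ ≤ A) →
      (∀ u ∈ sphCap n θ, c₀ ≤ sigmaElem n k G u) → c ≤ G (Etop n) := by
  obtain ⟨a, ha, hσa⟩ :=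
    exists_pos_le_norm_fderiv_fderiv_of_le_sigmaElem n (Nat.one_le_iff_ne_zero.1 hk.1) hc₀
  have hsin : 0 < Real.sin θ := sin_pos_of_mem_Ioo hθ
  exact ⟨a ^ 2 * Real.sin θ ^ 2 / (128 * A), by positivity, fun g G h hcap hτ hupp hσ ↦
    h.sq_mul_sin_sq_div_le_apply_Etop hθ hτ hcap ha (fun u hu ↦ hσa G u (hσ u hu)) hupp⟩

/-- uniform non-collapsing in the vertical direction. -/
theorem capillary_noncollapsing_vertical (n k : ℕ) (hn : 1 ≤ n) (θ : ℝ)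
    (hθ : θ ∈ Ioc 0 (π / 2)) (hk : 1 ≤ k) (hkn : k ≤ n)
    (A c₀ : ℝ) (hA : 0 < A) (hc₀ : 0 < c₀)
    (s G : ℕ → V n → ℝ)
    (hext : ∀ i, IsHomExt n θ ⊤ (s i) (G i))
    (hcap : ∀ i, IsCapillaryF n θ (G i))
    (hτ : ∀ i, TauPos n θ (G i))
    (hC2 : ∀ i, ∀ u ∈ sphCap n θ,
      |G i u| + ‖fderiv ℝ (G i) u‖ + ‖fderiv ℝ (fderiv ℝ (G i)) u‖ ≤ A)
    (hint : ∀ i, ∀ j : Fin (n + 1), j ≠ Fin.last n →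
      ∫ ζ in capCap n θ, s i ζ * ζ j ∂μH[(n : ℝ)] = 0)
    (hσ : ∀ i, ∀ ζ ∈ capCap n θ,
      c₀ ≤ sigmaElem n k (G i) (ζ + Real.cos θ • Etop n)) :
    ∃ c : ℝ, 0 < c ∧ ∀ i, c ≤ G i (Etop n) := by
  obtain ⟨c, hc, hG⟩ := capillary_noncollapsing_vertical_general ⟨hk, hkn⟩
    ⟨hθ.1, hθ.2.trans_lt (half_lt_self pi_pos)⟩ hA hc₀
  refine ⟨c, hc, fun i ↦ hG (s i) (G i) ((hext i).of_le le_top) (hcap i) (hτ i).1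
    (fun u hu ↦ ?_) fun u hu ↦ ?_⟩
  · linarith [hC2 i u hu, abs_nonneg (G i u), norm_nonneg (fderiv ℝ (G i) u)]
  · simpa only [sub_add_cancel] using hσ i _ (sub_mem_capCap hu)
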